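/- arXiv:2504.21653 — 2 statements merged into one kernel-verified Lean document; each statement's English description precedes it below -/
import Mathlib

section
/- Let T be a tournament on n vertices with π₂(T) > (7n − 10)/36. Then T is path extendable: for every non-hamiltonian directed path P in T there exists a directed path P′ with the same initial and terminal vertices as P and V(P′) = V(P) ∪ {w} for some vertex w ∉ V(P). -/
open Finset

variable {V : Type*} [Fintype V] [DecidableEq V]

/-- A tournament: irreflexive, and between any two distinct vertices exactly one arc. -/
def IsTournament (r : V → V → Prop) : Prop :=
  (∀ u, ¬ r u u) ∧ ∀ u v : V, u ≠ v → Xor' (r u v) (r v u)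

/-- Out-degree. -/
def outDeg (r : V → V → Prop) [DecidableRel r] (u : V) : ℕ :=
  (Finset.univ.filter fun v => r u v).card

/-- In-degree. -/
def inDeg (r : V → V → Prop) [DecidableRel r] (u : V) : ℕ :=
  (Finset.univ.filter fun v => r v u).card

/-- Number of directed 2-paths from `u` to `v`. -/
def p2 (r : V → V → Prop) [DecidableRel r] (u v : V) : ℕ :=
  (Finset.univ.filter fun w => r u w ∧ r w v).card

/-- `π` is the minimum of `p2` over ordered pairs of distinct vertices. -/
def IsPi2 (r : V → V → Prop) [DecidableRel r] (π : ℕ) : Prop :=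
  (∀ x y : V, x ≠ y → π ≤ p2 r x y) ∧ ∃ x y : V, x ≠ y ∧ p2 r x y = π

/-- `i` is the irregularity: the maximum of |d⁺(u) − d⁻(u)|. -/
def IsIrreg (r : V → V → Prop) [DecidableRel r] (i : ℕ) : Prop :=
  (∀ u : V, ((outDeg r u : ℤ) - inDeg r u).natAbs ≤ i) ∧
    ∃ u : V, ((outDeg r u : ℤ) - inDeg r u).natAbs = i

/-- A directed path, as a duplicate-free list whose consecutive members are arcs. -/
def IsDirPath (r : V → V → Prop) (l : List V) : Prop :=
  l.Nodup ∧ l.Chain' r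

/-- A path is extendable if some path with the same endpoints uses its vertices plus one more. -/
def Extendable (r : V → V → Prop) (l : List V) : Prop :=
  ∃ w ∉ l.toFinset, ∃ l' : List V, IsDirPath r l' ∧ l'.head? = l.head? ∧
    l'.getLast? = l.getLast? ∧ l'.toFinset = insert w l.toFinset

/-- Every nonhamiltonian path (on at least two vertices) is extendable. -/
def PathExtendable (r : V → V → Prop) : Prop :=
  ∀ l : List V, IsDirPath r l → 2 ≤ l.length →
    l.toFinset ≠ Finset.univ → Extendable r l

section Core

variable {r : V → V → Prop} {p k : ℕ} {v : ℕ → V}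

/-- Path data (0-indexed), with vertices that cannot be inserted. -/
structure PData (r : V → V → Prop) (p k : ℕ) (v : ℕ → V) : Prop where
  irr : ∀ u, ¬ r u u
  asym : ∀ u w, r u w → ¬ r w u
  tot : ∀ u w, u ≠ w → r u w ∨ r w u
  hp : ∀ x y, x ≠ y → ∃ S : Finset V, p ≤ S.card ∧ ∀ z ∈ S, r x z ∧ r z y
  inj : ∀ i < k, ∀ j < k, v i = v j → i = j
  arc : ∀ i, i + 1 < k → r (v i) (v (i + 1))
  ins : ∀ w, (∀ i < k, v i ≠ w) → ∀ i, i + 1 < k → r (v i) w → ¬ r w (v (i + 1))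

lemma PData.flip (h : PData r p k v) : PData (fun a b => r b a) p k (fun i => v (k - 1 - i)) where
  irr := h.irr
  asym := fun u w => h.asym w u
  tot := fun u w hne => h.tot w u hne.symm
  hp := fun x y hne => by
    obtain ⟨S, hS, hz⟩ := h.hp y x hne.symm
    exact ⟨S, hS, fun z hzS => (hz z hzS).symm⟩
  inj := fun i hi j hj e => by
    have := h.inj _ (by omega) _ (by omega) e
    omega
  arc := fun i hi => by
    have := h.arc (k - 1 - (i + 1)) (by omega)
    rwa [show k - 1 - (i + 1) + 1 = k - 1 - i by omega] at this
  ins := fun w hw i hi h1 h2 => by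
    have hw' : ∀ j < k, v j ≠ w := fun j hj e => hw (k - 1 - j) (by omega) (by
      show v (k - 1 - (k - 1 - j)) = w
      rwa [show k - 1 - (k - 1 - j) = j by omega])
    have := h.ins w hw' (k - 1 - (i + 1)) (by omega) h2
    rw [show k - 1 - (i + 1) + 1 = k - 1 - i by omega] at this
    exact this h1

/-- Vertex set of the path. -/
def pset (k : ℕ) (v : ℕ → V) : Finset V := (Finset.range k).image v

lemma mem_pset {x : V} : x ∈ pset k v ↔ ∃ i < k, v i = x := by
  simp [pset]

lemma pset_flip : pset k (fun i => v (k - 1 - i)) = pset k v := by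
  ext x
  simp only [mem_pset]
  constructor
  · rintro ⟨i, hi, e⟩
    exact ⟨k - 1 - i, by omega, e⟩
  · rintro ⟨i, hi, e⟩
    exact ⟨k - 1 - i, by omega, by rwa [show k - 1 - (k - 1 - i) = i by omega]⟩

lemma PData.card (h : PData r p k v) : (pset k v).card = k := by
  rw [pset, Finset.card_image_of_injOn, Finset.card_range]
  intro i hi j hj e
  exact h.inj i (by simpa using hi) j (by simpa using hj) e

open Classical in
/-- Some vertex has small in-degree. -/
lemma PData.minDeg (h : PData r p k v) (N : Finset V) (hN : N.Nonempty) :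
    ∃ y ∈ N, 2 * (N.filter fun z => r z y).card + 1 ≤ N.card := by
  by_contra hcon
  push Not at hcon
  have h1 : ∑ y ∈ N, N.card ≤ ∑ y ∈ N, 2 * (N.filter fun z => r z y).card :=
    Finset.sum_le_sum fun y hy => by have := hcon y hy; omega
  have e1 : ∑ y ∈ N, (N.filter fun z => r z y).card = ∑ y ∈ N, (N.filter fun z => r y z).card := by
    simp only [Finset.card_filter]
    exact Finset.sum_comm
  have h2 : ∑ y ∈ N, ((N.filter fun z => r z y).card + (N.filter fun z => r y z).card)
      < ∑ y ∈ N, N.card := by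
    apply Finset.sum_lt_sum_of_nonempty hN
    intro y hy
    rw [← Finset.card_union_of_disjoint]
    · apply Finset.card_lt_card
      refine ⟨fun z hz => by simp at hz; tauto, fun hs => ?_⟩
      have := hs hy
      simp at this
      exact h.irr y this.2
    · rw [Finset.disjoint_left]
      intro z hz hz'
      simp at hz hz'
      exact h.asym _ _ hz.2 hz'.2
  rw [Finset.sum_add_distrib, ← e1] at h2
  rw [← Finset.mul_sum] at h1
  omega

open Classical in
lemma PData.outBig (h : PData r p k v) (S : Finset V) (x : V) (hne : ∃ y ∈ S, r x y)
    (hc : ∀ y ∈ S, r x y → ∀ z, r x z → r z y → z ∈ S) :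
    2 * p + 1 ≤ (S.filter fun y => r x y).card := by
  obtain ⟨y0, hy0, hxy0⟩ := hne
  obtain ⟨y, hy, hdeg⟩ := h.minDeg (S.filter fun y => r x y) ⟨y0, by simp [hy0, hxy0]⟩
  simp only [Finset.mem_filter] at hy
  obtain ⟨A, hA, hz⟩ := h.hp x y (by rintro rfl; exact h.irr _ hy.2)
  have : A.card ≤ ((S.filter fun y => r x y).filter fun z => r z y).card := by
    apply Finset.card_le_card
    intro z hzA
    obtain ⟨h1, h2⟩ := hz z hzA
    simp [h1, h2, hc y hy.1 hy.2 z h1 h2]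
  omega

/-- In-neighbours of an outside vertex are closed upwards. -/
lemma PData.up (h : PData r p k v) {w : V} (hw : w ∉ pset k v) {i j : ℕ} (hij : i ≤ j)
    (hj : j < k) (hi : r (v i) w) : r (v j) w := by
  have hw' : ∀ i < k, v i ≠ w := fun i hi e => hw (mem_pset.2 ⟨i, hi, e⟩)
  induction j, hij using Nat.le_induction with
  | base => exact hi
  | succ j hij ih =>
    have := h.ins w hw' j hj (ih (by omega))
    exact (h.tot _ _ (hw' _ hj)).resolve_right this

lemma PData.down (h : PData r p k v) {w : V} (hw : w ∉ pset k v) {i j : ℕ} (hij : i ≤ j)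
    (hj : j < k) (hi : r w (v j)) : r w (v i) := by
  have hw' : ∀ i < k, v i ≠ w := fun i hi e => hw (mem_pset.2 ⟨i, hi, e⟩)
  by_contra hcon
  have := h.up hw hij hj ((h.tot _ _ (hw' i (by omega))).resolve_right hcon)
  exact h.asym _ _ this hi

open Classical in
lemma PData.out0 (h : PData r p k v) (hk : 2 ≤ k) :
    2 * p + 1 ≤ ((pset k v).filter fun y => r (v 0) y).card := by
  apply h.outBig
  · exact ⟨v 1, mem_pset.2 ⟨1, by omega, rfl⟩, h.arc 0 (by omega)⟩
  · intro y hy h0y z h0z hzy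
    by_contra hz
    obtain ⟨c, hc, rfl⟩ := mem_pset.1 hy
    exact h.asym _ _ hzy (h.up hz (Nat.zero_le c) hc h0z)

open Classical in
lemma PData.out1 (h : PData r p k v) (hk : 3 ≤ k) :
    2 * p + 1 ≤ ((pset k v).filter fun y => r (v 1) y).card := by
  apply h.outBig
  · exact ⟨v 2, mem_pset.2 ⟨2, by omega, rfl⟩, h.arc 1 (by omega)⟩
  · intro y hy h0y z h0z hzy
    by_contra hz
    obtain ⟨c, hc, rfl⟩ := mem_pset.1 hy
    have : c ≠ 0 := by
      rintro rfl
      exact h.asym _ _ h0y (h.arc 0 (by omega))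
    exact h.asym _ _ hzy (h.up hz (show 1 ≤ c by omega) hc h0z)

open Classical in
lemma PData.deg (h : PData r p k v) (hp0 : 1 ≤ p) (x y : V) (hxy : x ≠ y) :
    2 * p + 1 ≤ (Finset.univ.filter fun y => r x y).card := by
  apply h.outBig
  · obtain ⟨A, hA, hz⟩ := h.hp x y hxy
    obtain ⟨z, hzA⟩ : A.Nonempty := Finset.card_pos.1 (by omega)
    exact ⟨z, Finset.mem_univ _, (hz z hzA).1⟩
  · simp

open Classical in
/-- First half of the final case. -/
lemma PData.half (h : PData r p k v) (hp0 : 1 ≤ p) (hk : 3 ≤ k) :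
    4 * p + 3 ≤ k + ((pset k v)ᶜ.filter fun w => r w (v 1)).card := by
  have h1 := h.out1 hk
  have h2 := h.flip.deg hp0 (v 1) (v 0) (fun e => by
    have := h.inj 1 (by omega) 0 (by omega) e
    omega)
  have hcov : (Finset.univ.filter fun y => r y (v 1)) ⊆
      ((pset k v).filter fun y => r y (v 1)) ∪ ((pset k v)ᶜ.filter fun w => r w (v 1)) := by
    intro z hz
    simp at hz ⊢
    tauto
  have h3 := (Finset.card_le_card hcov).trans (Finset.card_union_le _ _)
  have h4 : ((pset k v).filter fun y => r (v 1) y).card + ((pset k v).filter fun y => r y (v 1)).card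
      < (pset k v).card := by
    rw [← Finset.card_union_of_disjoint]
    · apply Finset.card_lt_card
      refine ⟨fun z hz => by simp at hz; tauto, fun hs => ?_⟩
      have := hs (mem_pset.2 ⟨1, by omega, rfl⟩ : v 1 ∈ pset k v)
      simp at this
      exact h.irr _ this.2
    · rw [Finset.disjoint_left]
      intro z hz hz'
      simp at hz hz'
      exact h.asym _ _ hz.2 hz'.2
  rw [h.card] at h4
  omega

open Classical in
/-- Second half of the final case. -/
lemma PData.half2 (h : PData r p k v) (hp0 : 1 ≤ p) (hk : 4 ≤ k)
    (hne : ((pset k v)ᶜ.filter fun w => r (v 1) w).Nonempty)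
    (hall : ∀ w ∉ pset k v, r (v 1) w ∨ r w (v (k - 2))) :
    4 * p + 1 ≤ ((pset k v)ᶜ.filter fun w => r (v 1) w).card +
      2 * ((pset k v)ᶜ.filter fun w => r w (v (k - 2))).card := by
  obtain ⟨x, hx, hdeg⟩ := h.flip.minDeg _ hne
  simp at hx
  have h2 := h.deg hp0 x (v 1) (fun e => h.irr _ (e ▸ hx.2))
  have hcov : (Finset.univ.filter fun y => r x y) ⊆
      ((((pset k v)ᶜ.filter fun w => r (v 1) w).filter fun z => r x z) ∪
        ((pset k v)ᶜ.filter fun w => r w (v (k - 2)))) ∪ {v 0} := by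
    intro z hz
    simp at hz ⊢
    by_cases hzP : z ∈ pset k v
    · obtain ⟨i, hi, rfl⟩ := mem_pset.1 hzP
      by_cases h0 : i = 0
      · subst h0; tauto
      · exact absurd hz (h.asym _ _ (h.up hx.1 (show 1 ≤ i by omega) hi hx.2))
    · have := hall z hzP
      tauto
  have h3 := (Finset.card_le_card hcov).trans (Finset.card_union_le _ _)
  have h4 := Finset.card_union_le (((pset k v)ᶜ.filter fun w => r (v 1) w).filter fun z => r x z)
    ((pset k v)ᶜ.filter fun w => r w (v (k - 2)))
  simp only [Finset.card_singleton] at h3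
  omega

open Classical in
/-- If there are at least two outside vertices, there are many. -/
lemma PData.outside (h : PData r p k v) (hp0 : 1 ≤ p) (hm : 2 ≤ (pset k v)ᶜ.card) :
    2 * p + 2 ≤ (pset k v)ᶜ.card := by
  obtain ⟨x, hx, hmin⟩ := Finset.exists_min_image (pset k v)ᶜ
    (fun w => ((Finset.range k).filter fun i => r w (v i)).card) (Finset.card_pos.1 (by omega))
  simp only [Finset.mem_compl] at hx hmin
  have hc : ∀ y ∈ (pset k v)ᶜ, ∀ z, r x z → r z y → z ∈ (pset k v)ᶜ := by
    intro y hy z hxz hzy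
    simp only [Finset.mem_compl] at hy ⊢
    intro hz
    obtain ⟨i, hi, rfl⟩ := mem_pset.1 hz
    have hlt : ((Finset.range k).filter fun i => r y (v i)).card <
        ((Finset.range k).filter fun i => r x (v i)).card := by
      apply Finset.card_lt_card
      refine ⟨fun j hj => ?_, fun hs => ?_⟩
      · simp at hj ⊢
        refine ⟨hj.1, ?_⟩
        rcases le_total i j with hij | hij
        · exact absurd hj.2 (h.asym _ _ (h.up hy hij hj.1 hzy))
        · exact h.down hx hij hi hxz
      · have := hs (show i ∈ _ by simp [hi, hxz])
        simp at this
        exact h.asym _ _ hzy this.2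
    have := hmin y hy
    omega
  obtain ⟨y, hy, hxy⟩ : ∃ y ∈ (pset k v)ᶜ, y ≠ x :=
    Finset.exists_mem_ne (by omega) x
  obtain ⟨A, hA, hz⟩ := h.hp x y hxy.symm
  obtain ⟨z, hzA⟩ : A.Nonempty := Finset.card_pos.1 (by omega)
  have h1 := h.outBig (pset k v)ᶜ x ⟨z, hc y hy z (hz z hzA).1 (hz z hzA).2, (hz z hzA).1⟩
    (fun y hy _ => hc y hy)
  have h2 : ((pset k v)ᶜ.filter fun y => r x y).card < (pset k v)ᶜ.card := by
    apply Finset.card_lt_card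
    refine ⟨Finset.filter_subset _ _, fun hs => ?_⟩
    have := hs (Finset.mem_compl.2 hx)
    simp at this
    exact h.irr _ this.2
  omega

/-- If only one vertex is outside. -/
lemma PData.single (h : PData r p k v) (hp0 : 2 ≤ p) (hk : 4 ≤ k) (w : V)
    (hw : w ∉ pset k v) (honly : ∀ z ∉ pset k v, z = w)
    (h1 : r w (v 1)) (h2 : r (v (k - 2)) w)
    (hrot : ∀ a b c, a < b → b < c → c + 1 < k → r (v a) (v (b + 1)) → r (v b) (v (c + 1)) →
      r (v c) w → r w (v (a + 1)) → False) : False := by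
  classical
  have hex : ∃ j, r (v j) w := ⟨_, h2⟩
  obtain ⟨j, hj, hjmin⟩ : ∃ j, r (v j) w ∧ ∀ i < j, ¬ r (v i) w :=
    ⟨Nat.find hex, Nat.find_spec hex, fun i hi => Nat.find_min hex hi⟩
  have hw' : ∀ i < k, v i ≠ w := fun i hi e => hw (mem_pset.2 ⟨i, hi, e⟩)
  have hjk : j ≤ k - 2 := by
    by_contra hcon
    exact hjmin _ (by omega) h2
  have hj2 : 2 ≤ j := by
    by_contra hcon
    exact h.asym _ _ h1 (h.up hw (show j ≤ 1 by omega) (by omega) hj)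
  have hlow : ∀ i < j, r w (v i) := fun i hi =>
    (h.tot _ _ (hw' i (by omega))).resolve_left (hjmin i hi)
  obtain ⟨A, hA, hzA⟩ := h.hp w (v (j + 1)) (hw' _ (by omega)).symm
  obtain ⟨z, hz, hzne⟩ : ∃ z ∈ A, z ≠ v (j - 1) := Finset.exists_mem_ne (by omega) _
  obtain ⟨hz1, hz2⟩ := hzA z hz
  have hzP : z ∈ pset k v := by
    by_contra hcon
    rw [honly z hcon] at hz1
    exact h.irr _ hz1
  obtain ⟨a, ha, rfl⟩ := mem_pset.1 hzP
  have haj : a < j - 1 := by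
    have : a ≠ j - 1 := fun e => hzne (by rw [e])
    by_contra hcon
    exact h.asym _ _ hz1 (h.up hw (show j ≤ a by omega) ha hj)
  obtain ⟨B, hB, hzB⟩ := h.hp (v j) w (hw' _ (by omega))
  obtain ⟨z, hz, hzne⟩ : ∃ z ∈ B, z ≠ v (j + 1) := Finset.exists_mem_ne (by omega) _
  obtain ⟨hy1, hy2⟩ := hzB z hz
  have hzP : z ∈ pset k v := by
    by_contra hcon
    rw [honly z hcon] at hy2
    exact h.irr _ hy2
  obtain ⟨y, hy, rfl⟩ := mem_pset.1 hzP
  have hyj : j + 1 < y := by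
    have e1 : y ≠ j + 1 := fun e => hzne (by rw [e])
    have e2 : y ≠ j := fun e => h.irr _ (e ▸ hy1)
    by_contra hcon
    exact hjmin y (by omega) hy2
  refine hrot a j (y - 1) (by omega) (by omega) (by omega) hz2 ?_ ?_ (hlow _ (by omega))
  · rwa [show y - 1 + 1 = y by omega]
  · exact h.up hw (show j ≤ y - 1 by omega) (by omega) hj

/-- The counting argument when some outside vertex is in the middle. -/
lemma PData.long (h : PData r p k v) (hk : 4 ≤ k)
    (hrot : ∀ b, 0 < b → b < k - 2 → r (v 0) (v (b + 1)) → r (v b) (v (k - 1)) → False) :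
    4 * p + 1 ≤ k := by
  classical
  have h0 := h.out0 (by omega)
  have h1 := h.flip.out0 (by omega)
  rw [pset_flip] at h1
  simp only [Nat.sub_zero] at h1
  set X := (Finset.Ioo 0 (k - 2)).filter fun b => r (v 0) (v (b + 1)) with hX
  set Y := (Finset.Ioo 0 (k - 2)).filter fun b => r (v b) (v (k - 1)) with hY
  have c0 : ((pset k v).filter fun y => r (v 0) y) ⊆
      X.image (fun b => v (b + 1)) ∪ {v 1, v (k - 1)} := by
    intro z hz
    simp only [Finset.mem_filter] at hz
    obtain ⟨hzP, hz⟩ := hz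
    obtain ⟨i, hi, rfl⟩ := mem_pset.1 hzP
    have : i ≠ 0 := by rintro rfl; exact h.irr _ hz
    by_cases e1 : i = 1
    · simp [e1]
    by_cases e2 : i = k - 1
    · simp [e2]
    apply Finset.mem_union_left
    refine Finset.mem_image.2 ⟨i - 1, ?_, by rw [show i - 1 + 1 = i by omega]⟩
    rw [hX, Finset.mem_filter, Finset.mem_Ioo, show i - 1 + 1 = i by omega]
    exact ⟨by omega, hz⟩
  have c1 : ((pset k v).filter fun y => r y (v (k - 1))) ⊆
      Y.image v ∪ {v 0, v (k - 2)} := by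
    intro z hz
    simp only [Finset.mem_filter] at hz
    obtain ⟨hzP, hz⟩ := hz
    obtain ⟨i, hi, rfl⟩ := mem_pset.1 hzP
    have : i ≠ k - 1 := by rintro rfl; exact h.irr _ hz
    by_cases e1 : i = 0
    · simp [e1]
    by_cases e2 : i = k - 2
    · simp [e2]
    apply Finset.mem_union_left
    refine Finset.mem_image.2 ⟨i, ?_, rfl⟩
    rw [hY, Finset.mem_filter, Finset.mem_Ioo]
    exact ⟨by omega, hz⟩
  have d0 := (Finset.card_le_card c0).trans (Finset.card_union_le _ _)
  have d1 := (Finset.card_le_card c1).trans (Finset.card_union_le _ _)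
  have e0 : (X.image (fun b => v (b + 1))).card ≤ X.card := Finset.card_image_le
  have e1 : (Y.image v).card ≤ Y.card := Finset.card_image_le
  have f0 : ({v 1, v (k - 1)} : Finset V).card ≤ 2 := Finset.card_le_two
  have f1 : ({v 0, v (k - 2)} : Finset V).card ≤ 2 := Finset.card_le_two
  have hdis : Disjoint X Y := by
    rw [Finset.disjoint_left]
    intro b hb hb'
    rw [hX, Finset.mem_filter, Finset.mem_Ioo] at hb
    rw [hY, Finset.mem_filter, Finset.mem_Ioo] at hb'
    exact hrot b hb.1.1 hb.1.2 hb.2 hb'.2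
  have hU : (X ∪ Y).card ≤ (Finset.Ioo 0 (k - 2)).card := by
    apply Finset.card_le_card
    exact Finset.union_subset (Finset.filter_subset _ _) (Finset.filter_subset _ _)
  rw [Finset.card_union_of_disjoint hdis, Nat.card_Ioo] at hU
  omega

/-- The main contradiction. -/
lemma PData.main (h : PData r p k v) (hk : 2 ≤ k) (hn : 7 * Fintype.card V < 36 * p + 10)
    (hW : (pset k v)ᶜ.Nonempty)
    (hrot : ∀ w ∉ pset k v, ∀ a b c, a < b → b < c → c + 1 < k → r (v a) (v (b + 1)) →
      r (v b) (v (c + 1)) → r (v c) w → r w (v (a + 1)) → False) : False := by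
  classical
  have hkn : k + (pset k v)ᶜ.card = Fintype.card V := by
    rw [← Finset.card_add_card_compl (pset k v), h.card]
  have hne : v 0 ≠ v 1 := fun e => by
    have := h.inj 0 (by omega) 1 (by omega) e
    omega
  have hn2 : 3 ≤ Fintype.card V := by have := Finset.card_pos.2 hW; omega
  have hp1 : 1 ≤ p := by omega
  have hp2 : 2 ≤ p := by
    have a1 := h.deg hp1 _ _ hne
    have a2 := h.flip.deg hp1 _ _ hne
    have : (Finset.univ.filter fun y => r (v 0) y).card +
        (Finset.univ.filter fun y => r y (v 0)).card < (Finset.univ : Finset V).card := by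
      rw [← Finset.card_union_of_disjoint]
      · apply Finset.card_lt_card
        refine ⟨fun z hz => by simp, fun hs => ?_⟩
        have := hs (Finset.mem_univ (v 0))
        simp at this
        exact h.irr _ this
      · rw [Finset.disjoint_left]
        intro z hz hz'
        simp at hz hz'
        exact h.asym _ _ hz hz'
    rw [Finset.card_univ] at this
    omega
  have hk6 : 5 ≤ k := by
    have := (h.out0 hk).trans (Finset.card_filter_le _ _)
    rw [h.card] at this
    omega
  by_cases hmid : ∃ w ∉ pset k v, r w (v 1) ∧ r (v (k - 2)) w
  · obtain ⟨w, hw, hw1, hw2⟩ := hmid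
    by_cases hm : 2 ≤ (pset k v)ᶜ.card
    · have a1 := h.outside hp1 hm
      have a2 := h.long (by omega) (fun b hb hb' h1 h2 =>
        hrot w hw 0 b (k - 2) hb hb' (by omega) h1
          (by rwa [show k - 2 + 1 = k - 1 by omega]) hw2 hw1)
      omega
    · refine h.single hp2 (by omega) w hw ?_ hw1 hw2 (hrot w hw)
      intro z hz
      by_contra hzw
      exact hm (Finset.one_lt_card.2 ⟨z, by simpa using hz, w, by simpa using hw, hzw⟩)
  · push Not at hmid
    have hne1 : ∀ w ∉ pset k v, ∀ i < k, v i ≠ w :=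
      fun w hw i hi e => hw (mem_pset.2 ⟨i, hi, e⟩)
    have hall : ∀ w ∉ pset k v, r (v 1) w ∨ r w (v (k - 2)) := by
      intro w hw
      rcases h.tot _ _ (hne1 w hw 1 (by omega)) with h1 | h1
      · exact Or.inl h1
      · exact Or.inr ((h.tot _ _ (hne1 w hw (k - 2) (by omega))).resolve_left (hmid w hw h1))
    have eA : ((pset k v)ᶜ.filter fun w => r w (v 1)) =
        ((pset k v)ᶜ.filter fun w => r w (v (k - 2))) := by
      ext w
      simp only [Finset.mem_filter, Finset.mem_compl]
      refine and_congr_right fun hw => ⟨fun h1 => ?_, fun h1 => ?_⟩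
      · exact (hall w hw).resolve_left (h.asym _ _ h1)
      · exact h.down hw (by omega) (by omega) h1
    have eB : ((pset k v)ᶜ.filter fun w => r (v (k - 2)) w) =
        ((pset k v)ᶜ.filter fun w => r (v 1) w) := by
      ext w
      simp only [Finset.mem_filter, Finset.mem_compl]
      refine and_congr_right fun hw => ⟨fun h1 => ?_, fun h1 => ?_⟩
      · exact (hall w hw).resolve_right (h.asym _ _ h1)
      · exact h.up hw (by omega) (by omega) h1
    have i1 := h.half hp1 (by omega)
    have i2 := h.flip.half hp1 (by omega)
    rw [pset_flip] at i2
    simp only [show k - 1 - 1 = k - 2 by omega] at i2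
    rw [eA] at i1
    rw [eB] at i2
    have key : 4 * p + 1 ≤ ((pset k v)ᶜ.filter fun w => r (v 1) w).card +
          2 * ((pset k v)ᶜ.filter fun w => r w (v (k - 2))).card ∨
        4 * p + 1 ≤ ((pset k v)ᶜ.filter fun w => r w (v (k - 2))).card +
          2 * ((pset k v)ᶜ.filter fun w => r (v 1) w).card := by
      obtain ⟨w, hw⟩ := hW
      have hw0 := Finset.mem_compl.1 hw
      rcases hall w hw0 with h1 | h1
      · exact Or.inl (h.half2 hp1 (by omega) ⟨w, by simp [hw0, h1]⟩ hall)
      · right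
        have := h.flip.half2 hp1 (by omega)
        simp only [pset_flip, show k - 1 - 1 = k - 2 by omega,
          show k - 1 - (k - 2) = 1 by omega] at this
        exact this ⟨w, by simp [hw0, h1]⟩ (fun w hw => (hall w hw).symm)
    have hcov : (pset k v)ᶜ.card = ((pset k v)ᶜ.filter fun w => r (v 1) w).card +
        ((pset k v)ᶜ.filter fun w => r w (v (k - 2))).card := by
      rw [← Finset.card_union_of_disjoint]
      · congr 1
        ext w
        simp only [Finset.mem_union, Finset.mem_filter, Finset.mem_compl]
        have := hall w
        tauto
      · rw [Finset.disjoint_left]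
        intro z hz hz'
        rw [← eA] at hz'
        simp at hz hz'
        exact h.asym _ _ hz.2 hz'.2
    omega

end Core

lemma ext_insert {r : V → V → Prop} (l : List V) (hl : IsDirPath r l) (w : V) (hw : w ∉ l) (i : ℕ)
    (hi : i + 1 < l.length) (h1 : r (l[i]'(by omega)) w) (h2 : r w l[i + 1]) : Extendable r l := by
  obtain ⟨hnd, hch⟩ := hl
  have hch : l.IsChain r := hch
  have hsplit : l = l.take (i + 1) ++ l.drop (i + 1) := (List.take_append_drop _ _).symm
  have hperm : (l.take (i + 1) ++ w :: l.drop (i + 1)).Perm (w :: l) := by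
    conv_rhs => rw [hsplit]
    exact List.perm_middle
  refine ⟨w, by simpa using hw, l.take (i + 1) ++ w :: l.drop (i + 1), ⟨?_, ?_⟩, ?_, ?_, ?_⟩
  · exact hperm.nodup_iff.2 (List.nodup_cons.2 ⟨hw, hnd⟩)
  · show List.IsChain r _
    rw [List.isChain_append, List.isChain_cons]
    refine ⟨hch.take _, ⟨?_, hch.drop _⟩, ?_⟩
    · intro y hy
      rw [List.head?_drop, List.getElem?_eq_getElem hi] at hy
      simp at hy
      exact hy ▸ h2
    · intro x hx y hy
      rw [List.getLast?_take] at hx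
      simp [List.getElem?_eq_getElem (show i < l.length by omega)] at hx hy
      rw [← hx, ← hy]
      exact h1
  · rw [List.head?_append, List.head?_take]
    have : l ≠ [] := by rintro rfl; simp at hi
    simp
    rw [List.head?_eq_some_head this]
    simp
  · rw [List.getLast?_append, List.getLast?_cons, List.getLast?_drop]
    rw [if_neg (by omega)]
    have : l ≠ [] := by rintro rfl; simp at hi
    rw [List.getLast?_eq_some_getLast this]
    simp
  · rw [List.toFinset_eq_of_perm _ _ hperm]
    simp

lemma ext_rot {r : V → V → Prop} (l : List V) (hl : IsDirPath r l) (w : V) (hw : w ∉ l)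
    (a b c : ℕ) (hab : a < b) (hbc : b < c)
    (hc : c + 1 < l.length) (h1 : r (l[a]'(by omega)) (l[b + 1]'(by omega)))
    (h2 : r (l[b]'(by omega)) l[c + 1]) (h3 : r (l[c]'(by omega)) w)
    (h4 : r w (l[a + 1]'(by omega))) : Extendable r l := by
  obtain ⟨hnd, hch⟩ := hl
  have hch : l.IsChain r := hch
  set A := l.take (a + 1) with hA
  set B := (l.take (b + 1)).drop (a + 1) with hB
  set C := (l.take (c + 1)).drop (b + 1) with hC
  set D := l.drop (c + 1) with hD
  have s1 : l.take (b + 1) = A ++ B := by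
    rw [hA, hB]
    conv_lhs => rw [← List.take_append_drop (a + 1) (l.take (b + 1))]
    rw [List.take_take, min_eq_left (by omega)]
  have s2 : l.take (c + 1) = A ++ B ++ C := by
    rw [← s1, hC]
    conv_lhs => rw [← List.take_append_drop (b + 1) (l.take (c + 1))]
    rw [List.take_take, min_eq_left (by omega)]
  have hsplit : l = A ++ B ++ C ++ D := by
    rw [← s2, hD, List.take_append_drop]
  have hne : l ≠ [] := by rintro rfl; simp at hc
  have lA : A.getLast? = some (l[a]'(by omega)) := by
    rw [hA, List.getLast?_take]
    simp [List.getElem?_eq_getElem (show a < l.length by omega)]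
  have fB : B.head? = some (l[a + 1]'(by omega)) := by
    rw [hB, List.head?_drop, List.getElem?_take_of_lt (by omega), List.getElem?_eq_getElem]
  have lB : B.getLast? = some (l[b]'(by omega)) := by
    rw [hB, List.getLast?_drop, if_neg (by simp; omega), List.getLast?_take]
    simp [List.getElem?_eq_getElem (show b < l.length by omega)]
  have fC : C.head? = some (l[b + 1]'(by omega)) := by
    rw [hC, List.head?_drop, List.getElem?_take_of_lt (by omega), List.getElem?_eq_getElem]
  have lC : C.getLast? = some (l[c]'(by omega)) := by
    rw [hC, List.getLast?_drop, if_neg (by simp; omega), List.getLast?_take]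
    simp [List.getElem?_eq_getElem (show c < l.length by omega)]
  have fD : D.head? = some l[c + 1] := by
    rw [hD, List.head?_drop, List.getElem?_eq_getElem]
  have lD : D.getLast? = l.getLast? := by
    rw [hD, List.getLast?_drop, if_neg (by omega)]
  have fA : A.head? = l.head? := by
    rw [hA, List.head?_take]; simp
  have cA : A.IsChain r := hch.take _
  have cB : B.IsChain r := (hch.take _).drop _
  have cC : C.IsChain r := (hch.take _).drop _
  have cD : D.IsChain r := hch.drop _
  have hperm : (A ++ (C ++ (w :: (B ++ D)))).Perm (w :: l) := by
    conv_rhs => rw [hsplit]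
    rw [List.perm_iff_count]
    intro x
    simp only [List.count_append, List.count_cons]
    omega
  refine ⟨w, by simpa using hw, A ++ (C ++ (w :: (B ++ D))), ⟨?_, ?_⟩, ?_, ?_, ?_⟩
  · exact hperm.nodup_iff.2 (List.nodup_cons.2 ⟨hw, hnd⟩)
  · show List.IsChain r _
    rw [List.isChain_append, List.isChain_append, List.isChain_cons, List.isChain_append]
    simp only [List.head?_append, List.head?_cons, lA, lB, lC, fB, fC, fD]
    simp [cA, cB, cC, cD, h1, h2, h3, h4]
  · rw [List.head?_append, fA, List.head?_eq_some_head hne]; simp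
  · simp only [List.getLast?_append, List.getLast?_cons, lD, List.getLast?_eq_some_getLast hne]
    simp
  · rw [List.toFinset_eq_of_perm _ _ hperm]
    simp

theorem stmt16 (r : V → V → Prop) [DecidableRel r] (hT : IsTournament r)
    (π : ℕ) (hπ : IsPi2 r π)
    (hbig : (7 * Fintype.card V : ℤ) - 10 < 36 * π) :
    PathExtendable r := by
  intro l hl hlen hne
  by_contra hext
  obtain ⟨hirr, hxor⟩ := hT
  have hasym : ∀ u w, r u w → ¬ r w u := by
    intro u w h1 h2
    have : u ≠ w := by rintro rfl; exact hirr _ h1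
    rcases hxor u w this with h | h
    · exact h.2 h2
    · exact h.2 h1
  have htot : ∀ u w, u ≠ w → r u w ∨ r w u := by
    intro u w h1
    rcases hxor u w h1 with h | h
    · exact Or.inl h.1
    · exact Or.inr h.1
  let d : V := l[0]'(by omega)
  have hv : ∀ i (hi : i < l.length), l.getD i d = l[i] := fun i hi => by
    simp [List.getD, List.getElem?_eq_getElem hi]
  have hset : pset l.length (fun i => l.getD i d) = l.toFinset := by
    ext x
    rw [mem_pset, List.mem_toFinset, List.mem_iff_getElem]
    constructor
    · rintro ⟨i, hi, e⟩
      exact ⟨i, hi, by rw [← e]; exact (hv i hi).symm⟩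
    · rintro ⟨i, hi, e⟩
      exact ⟨i, hi, by rw [← e]; exact hv i hi⟩
  have hP : PData r π l.length (fun i => l.getD i d) := by
    refine ⟨hirr, hasym, htot, ?_, ?_, ?_, ?_⟩
    · intro x y hxy
      exact ⟨Finset.univ.filter fun w => r x w ∧ r w y, hπ.1 x y hxy, fun z hz => by simpa using hz⟩
    · intro i hi j hj e
      simp only [hv i hi, hv j hj] at e
      exact (List.Nodup.getElem_inj_iff hl.1).1 e
    · intro i hi
      simp only [hv i (by omega), hv (i + 1) hi]
      exact List.isChain_iff_getElem.1 hl.2 i hi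
    · intro w hw i hi h1 h2
      simp only [hv i (by omega), hv (i + 1) hi] at h1 h2
      refine hext (ext_insert l hl w ?_ i hi h1 h2)
      intro hwl
      obtain ⟨j, hj, e⟩ := List.mem_iff_getElem.1 hwl
      exact hw j hj (by rw [← e]; exact hv j hj)
  refine hP.main hlen (by omega) ?_ ?_
  · rw [hset]
    rw [Finset.nonempty_iff_ne_empty]
    intro h
    exact hne (by simpa using h)
  · rw [hset]
    intro w hw a b c hab hbc hc h1 h2 h3 h4
    simp only [hv a (by omega), hv (b + 1) (by omega), hv b (by omega), hv (c + 1) hc,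
      hv c (by omega), hv (a + 1) (by omega)] at h1 h2 h3 h4
    exact hext (ext_rot l hl w (by simpa using hw) a b c hab hbc hc h1 h2 h3 h4)
end

section
/- Let T be a tournament on n ≥ 9 vertices with π₂(T) > (n−9)/12 and i(T) < 2π₂(T) − (n+8)/6. Then T is path extendable. -/
open Finset

variable {V : Type*} [Fintype V] [DecidableEq V]

section Aux

lemma tflip {r : V → V → Prop} (hT : IsTournament r) : IsTournament (fun a b => r b a) :=
  ⟨hT.1, fun u v h => hT.2 v u h.symm⟩

lemma t_not {r : V → V → Prop} (hT : IsTournament r) {u v : V} (h : r u v) : ¬ r v u := by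
  intro h'
  by_cases e : u = v
  · subst e; exact hT.1 _ h
  · have := hT.2 u v e
    rcases this with ⟨_, _⟩ | ⟨_, _⟩ <;> tauto

lemma t_or {r : V → V → Prop} (hT : IsTournament r) {u v : V} (h : u ≠ v) (h1 : ¬ r u v) :
    r v u := by
  have := hT.2 u v h
  rcases this with ⟨_, _⟩ | ⟨_, _⟩ <;> tauto

lemma t_ne {r : V → V → Prop} (hT : IsTournament r) {u v : V} (h : r u v) : u ≠ v := by
  rintro rfl; exact hT.1 _ h

lemma in_out (r : V → V → Prop) [DecidableRel r] (hT : IsTournament r) (S : Finset V) (x : V)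
    (hx : x ∈ S) : (S.filter fun q => r q x).card + (S.filter fun q => r x q).card + 1 = S.card := by
  have h1 : (S.filter fun q => r x q) = (S.erase x).filter (fun q => ¬ r q x) := by
    ext q
    simp only [mem_filter, mem_erase]
    constructor
    · rintro ⟨a, b⟩; exact ⟨⟨(t_ne hT b).symm, a⟩, t_not hT b⟩
    · rintro ⟨⟨a, b⟩, c⟩; exact ⟨b, t_or hT a c⟩
  have h2 : (S.filter fun q => r q x) = (S.erase x).filter (fun q => r q x) := by
    ext q
    simp only [mem_filter, mem_erase]
    constructor
    · rintro ⟨a, b⟩; exact ⟨⟨(t_ne hT b), a⟩, b⟩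
    · rintro ⟨⟨a, b⟩, c⟩; exact ⟨b, c⟩
  rw [h1, h2, Finset.card_filter_add_card_filter_not, card_erase_of_mem hx]
  have := card_pos.2 ⟨x, hx⟩
  omega

lemma sum_in (r : V → V → Prop) [DecidableRel r] (hT : IsTournament r) (S : Finset V) :
    ∑ x ∈ S, (2 * (S.filter fun q => r q x).card + 1) = ∑ _x ∈ S, S.card := by
  have h1 : ∑ x ∈ S, (S.filter fun q => r q x).card = ∑ x ∈ S, (S.filter fun q => r x q).card := by
    have := Finset.sum_card_bipartiteAbove_eq_sum_card_bipartiteBelow (s := S) (t := S) r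
    unfold bipartiteAbove bipartiteBelow at this
    exact this.symm
  have h2 : ∑ x ∈ S, ((S.filter fun q => r q x).card + (S.filter fun q => r x q).card + 1)
      = ∑ _x ∈ S, S.card := Finset.sum_congr rfl fun x hx => in_out r hT S x hx
  rw [← h2]
  simp only [sum_add_distrib, ← mul_sum]
  omega

lemma ex_low (r : V → V → Prop) [DecidableRel r] (hT : IsTournament r) (S : Finset V)
    (hS : S.Nonempty) : ∃ x ∈ S, 2 * (S.filter fun q => r q x).card + 1 ≤ S.card :=
  Finset.exists_le_of_sum_le hS (sum_in r hT S).le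

lemma ex_high (r : V → V → Prop) [DecidableRel r] (hT : IsTournament r) (S : Finset V)
    (hS : S.Nonempty) : ∃ x ∈ S, S.card ≤ 2 * (S.filter fun q => r q x).card + 1 :=
  Finset.exists_le_of_sum_le hS (sum_in r hT S).ge

/-- path extension by inserting a vertex -/
lemma ext1 (r : V → V → Prop) (p : ℕ → V) (k : ℕ)
    (hl : IsDirPath r ((List.range k).map p)) (w : V) (hw : w ∉ ((List.range k).map p).toFinset)
    (j : ℕ) (hj : j + 1 < k) (h1 : r (p j) w) (h2 : r w (p (j+1))) :
    Extendable r ((List.range k).map p) := by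
  obtain ⟨d, rfl⟩ : ∃ d, k = (j + 1) + (d + 1) := ⟨k - (j+1) - 1, by omega⟩
  have e : (List.range ((j+1) + (d+1))).map p =
      (List.range' 0 (j+1)).map p ++ (List.range' (j+1) (d+1)).map p := by
    rw [← List.map_append, List.range_eq_range', ← List.range'_append_1, Nat.zero_add]
  rw [e] at hl hw ⊢
  refine ⟨w, hw, (List.range' 0 (j+1)).map p ++ (w :: (List.range' (j+1) (d+1)).map p), ⟨?_, ?_⟩, ?_, ?_, ?_⟩
  · rw [(List.perm_middle).nodup_iff, List.nodup_cons]
    exact ⟨by simpa using hw, hl.1⟩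
  · have := hl.2
    unfold List.Chain' at *
    simp only [List.isChain_append, List.isChain_cons] at *
    simp [List.head?_range', List.getLast?_range'] at *
    tauto
  · simp [List.head?_append, List.head?_range']
  · simp [List.getLast?_append, List.getLast?_cons, List.getLast?_range']
  · ext z; simp

lemma ext2 (r : V → V → Prop) (p : ℕ → V) (k : ℕ)
    (hl : IsDirPath r ((List.range k).map p)) (w : V) (hw : w ∉ ((List.range k).map p).toFinset)
    (a b c : ℕ) (hab : a < b) (hbc : b < c) (hck : c + 1 < k)
    (h1 : r (p a) (p (b+1))) (h2 : r (p c) w) (h3 : r w (p (a+1))) (h4 : r (p b) (p (c+1))) :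
    Extendable r ((List.range k).map p) := by
  obtain ⟨B, rfl⟩ : ∃ B, b = a + 1 + B := ⟨b - (a+1), by omega⟩
  obtain ⟨C, rfl⟩ : ∃ C, c = a + 1 + B + 1 + C := ⟨c - (a + 1 + B + 1), by omega⟩
  obtain ⟨D, rfl⟩ : ∃ D, k = (a + 1) + (B + 1) + (C + 1) + (D + 1) := ⟨k - (a + 1 + B + 1 + C + 1 + 1), by omega⟩
  have e : (List.range ((a + 1) + (B + 1) + (C + 1) + (D + 1))).map p =
      (List.range' 0 (a+1)).map p ++ ((List.range' (a+1) (B+1)).map p ++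
      ((List.range' (a+1+(B+1)) (C+1)).map p ++ (List.range' (a+1+(B+1)+(C+1)) (D+1)).map p)) := by
    simp only [← List.map_append]
    congr 1
    rw [List.range_eq_range', ← List.range'_append_1, ← List.range'_append_1, ← List.range'_append_1]
    simp only [Nat.zero_add, List.append_assoc, Nat.add_assoc]
  rw [e] at hl hw ⊢
  set l1 := (List.range' 0 (a+1)).map p with d1
  set l2 := (List.range' (a+1) (B+1)).map p with d2
  set l3 := (List.range' (a+1+(B+1)) (C+1)).map p with d3
  set l4 := (List.range' (a+1+(B+1)+(C+1)) (D+1)).map p with d4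
  have q1 : l1.head? = some (p 0) := by simp [d1, List.head?_range']
  have q2 : l2.head? = some (p (a+1)) := by simp [d2, List.head?_range']
  have q3 : l3.head? = some (p (a+1+B+1)) := by simp [d3, List.head?_range', Nat.add_assoc]
  have q4 : l4.head? = some (p (a+1+B+1+C+1)) := by simp [d4, List.head?_range', Nat.add_assoc]
  have z1 : l1.getLast? = some (p a) := by simp [d1, List.getLast?_range']
  have z2 : l2.getLast? = some (p (a+1+B)) := by simp [d2, List.getLast?_range', ← Nat.add_assoc]
  have z3 : l3.getLast? = some (p (a+1+B+1+C)) := by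
    simp [d3, List.getLast?_range', ← Nat.add_assoc]
  obtain ⟨y, z4⟩ : ∃ y, l4.getLast? = some y := by simp [d4, List.getLast?_range']
  clear_value l1 l2 l3 l4
  have hp : (l1 ++ (l3 ++ (w :: (l2 ++ l4)))).Perm (w :: (l1 ++ (l2 ++ (l3 ++ l4)))) := by
    rw [← Multiset.coe_eq_coe]
    simp only [← Multiset.coe_add, ← Multiset.cons_coe, ← Multiset.singleton_add]
    abel
  refine ⟨w, hw, l1 ++ (l3 ++ (w :: (l2 ++ l4))), ⟨?_, ?_⟩, ?_, ?_, ?_⟩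
  · rw [hp.nodup_iff, List.nodup_cons]
    exact ⟨by simpa using hw, hl.1⟩
  · have := hl.2
    unfold List.Chain' at *
    simp only [List.isChain_append, List.isChain_cons] at *
    simp [List.head?_append, q1, q2, q3, q4, z1, z2, z3] at *
    tauto
  · simp [List.head?_append, q1]
  · simp [List.getLast?_append, List.getLast?_cons, z4]
  · ext z; simp; tauto


lemma ex_low' (r : V → V → Prop) [DecidableRel r] (hT : IsTournament r) (S : Finset V)
    (hS : S.Nonempty) : ∃ x ∈ S, 2 * (S.filter fun q => r x q).card + 1 ≤ S.card :=
  ex_low (fun a b => r b a) (tflip hT) S hS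

lemma ex_high' (r : V → V → Prop) [DecidableRel r] (hT : IsTournament r) (S : Finset V)
    (hS : S.Nonempty) : ∃ x ∈ S, S.card ≤ 2 * (S.filter fun q => r x q).card + 1 :=
  ex_high (fun a b => r b a) (tflip hT) S hS

lemma core (r : V → V → Prop) [DecidableRel r] (hT : IsTournament r)
    (π i n : ℕ) (hn : n = Fintype.card V) (hπ : ∀ x y : V, x ≠ y → π ≤ p2 r x y)
    (hout1 : ∀ u, n ≤ 2 * outDeg r u + 1 + i) (hout2 : ∀ u, 2 * outDeg r u + 1 ≤ n + i)
    (hin1 : ∀ u, n ≤ 2 * inDeg r u + 1 + i) (hin2 : ∀ u, 2 * inDeg r u + 1 ≤ n + i)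
    (hn9 : 9 ≤ n) (hbig : 6 * i + n + 9 ≤ 12 * π)
    (p : ℕ → V) (k : ℕ) (hk2 : 2 ≤ k) (hinj : ∀ a < k, ∀ b < k, p a = p b → a = b)
    (harc : ∀ a, a + 1 < k → r (p a) (p (a+1)))
    (P : Finset V) (hP : P = (range k).image p) (w0 : V) (hw0 : w0 ∉ P)
    (E1 : ∀ w ∉ P, ∀ j, j + 1 < k → r (p j) w → ¬ r w (p (j+1)))
    (E2 : ∀ w ∉ P, ∀ a b c, a < b → b < c → c + 1 < k → r (p a) (p (b+1)) → r (p c) w →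
      r w (p (a+1)) → ¬ r (p b) (p (c+1))) : False := by
  have pi2 : 2 ≤ π := by omega
  have memP : ∀ v, v ∈ P ↔ ∃ a < k, p a = v := by intro v; simp [hP]
  have pP : ∀ a < k, p a ∈ P := fun a ha => (memP _).2 ⟨a, ha, rfl⟩
  have cardP : P.card = k := by
    rw [hP, card_image_of_injOn, card_range]
    intro a ha b hb h
    exact hinj a (by simpa using ha) b (by simpa using hb) h
  have nePW : ∀ a < k, ∀ w ∉ P, p a ≠ w := by
    rintro a ha w hw rfl; exact hw (pP a ha)
  have mono : ∀ w ∉ P, ∀ a b, a ≤ b → b < k → r (p a) w → r (p b) w := by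
    intro w hw a b hab
    induction b, hab using Nat.le_induction with
    | base => exact fun _ h => h
    | succ b hb ih =>
      intro hbk h
      exact t_or hT (nePW _ hbk w hw).symm (E1 w hw b hbk (ih (by omega) h))
  have mono' : ∀ w ∉ P, ∀ a b, a ≤ b → b < k → r w (p b) → r w (p a) := by
    intro w hw a b hab hbk h
    by_contra h'
    exact t_not hT h (mono w hw a b hab hbk (t_or hT (nePW a (by omega) w hw).symm h'))
  have hp : ∀ (x y : V) (S : Finset V), x ≠ y → (∀ q, r x q → r q y → q ∈ S) → π ≤ S.card := by
    intro x y S hxy h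
    refine (hπ x y hxy).trans (card_le_card ?_)
    intro q hq
    simp only [mem_filter, mem_univ, true_and] at hq
    exact h q hq.1 hq.2
  have hk4 : 4 ≤ k := by
    have h01 := harc 0 (by omega)
    have := hp (p 0) (p 1) ((P.erase (p 0)).erase (p 1)) (t_ne hT h01) (by
      intro q h1 h2
      simp only [mem_erase]
      refine ⟨t_ne hT h2, (t_ne hT h1).symm, ?_⟩
      by_contra hq
      exact E1 q hq 0 (by omega) h1 h2)
    rw [card_erase_of_mem, card_erase_of_mem (pP 0 (by omega)), cardP] at this
    · omega
    · exact mem_erase.2 ⟨(t_ne hT h01).symm, pP 1 (by omega)⟩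
  -- splitting degrees into P-part and outside part
  have split : ∀ (f : V → Prop) [DecidablePred f],
      (univ.filter f).card = (P.filter f).card + (univ.filter fun w => w ∉ P ∧ f w).card := by
    intro f _
    rw [← card_union_of_disjoint]
    · congr 1
      ext q
      simp only [mem_filter, mem_univ, true_and, mem_union]
      tauto
    · rw [Finset.disjoint_left]
      intro q
      simp only [mem_filter, mem_univ, true_and]
      tauto
  have hlast : k - 2 + 1 = k - 1 := by omega
  by_cases hmid : ∃ w, w ∉ P ∧ r w (p 1) ∧ r (p (k-2)) w
  · obtain ⟨w, hw, hw1, hw2⟩ := hmid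
    set N1 := P.filter (fun q => r (p 0) q) with hN1
    set N2 := P.filter (fun q => r q (p (k-1))) with hN2
    set W0 := univ.filter (fun w => w ∉ P ∧ r (p 0) w) with hW0
    set WK := univ.filter (fun w => w ∉ P ∧ r w (p (k-1))) with hWK
    have c1 : 2 * π + 1 ≤ N1.card := by
      obtain ⟨x, hx, hx'⟩ := ex_low r hT N1 ⟨p 1, by
        simp only [hN1, mem_filter]; exact ⟨pP 1 (by omega), harc 0 (by omega)⟩⟩
      simp only [hN1, mem_filter] at hx
      have := hp (p 0) x (N1.filter fun q => r q x) (t_ne hT hx.2) (by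
        intro q h1 h2
        simp only [hN1, mem_filter]
        refine ⟨⟨?_, h1⟩, h2⟩
        by_contra hq
        obtain ⟨a, ha, rfl⟩ := (memP x).1 hx.1
        exact t_not hT h2 (mono q hq 0 a (by omega) ha h1))
      omega
    have c2 : 2 * π + 1 ≤ N2.card := by
      obtain ⟨x, hx, hx'⟩ := ex_low' r hT N2 ⟨p (k-2), by
        simp only [hN2, mem_filter]
        refine ⟨pP _ (by omega), ?_⟩
        have := harc (k-2) (by omega)
        rwa [hlast] at this⟩
      simp only [hN2, mem_filter] at hx
      have := hp x (p (k-1)) (N2.filter fun q => r x q) (t_ne hT hx.2) (by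
        intro q h1 h2
        simp only [hN2, mem_filter]
        refine ⟨⟨?_, h2⟩, h1⟩
        by_contra hq
        obtain ⟨a, ha, rfl⟩ := (memP x).1 hx.1
        exact t_not hT h1 (mono' q hq a (k-1) (by omega) (by omega) h2))
      omega
    have d1 : outDeg r (p 0) = N1.card + W0.card := split _
    have d2 : inDeg r (p (k-1)) = N2.card + WK.card := split _
    have key : N1.card + N2.card ≤ k + 1 := by
      set J1 := (Icc 1 (k-3)).filter (fun b => r (p 0) (p (b+1))) with hJ1
      set J2 := (Icc 1 (k-3)).filter (fun b => r (p b) (p (k-1))) with hJ2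
      have s1 : N1 ⊆ {p 1, p (k-1)} ∪ J1.image (fun b => p (b+1)) := by
        intro q hq
        simp only [hN1, mem_filter] at hq
        obtain ⟨hq1, hq2⟩ := hq
        obtain ⟨a, ha, rfl⟩ := (memP q).1 hq1
        simp only [mem_union, mem_insert, mem_singleton, mem_image]
        have a0 : a ≠ 0 := by rintro rfl; exact hT.1 _ hq2
        by_cases a1 : a = 1
        · subst a1; simp
        by_cases a2 : a = k - 1
        · subst a2; simp
        right
        have e : a - 1 + 1 = a := by omega
        refine ⟨a - 1, ?_, by rw [e]⟩
        simp only [hJ1, mem_filter, mem_Icc]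
        refine ⟨by omega, ?_⟩
        rwa [e]
      have s2 : N2 ⊆ {p 0, p (k-2)} ∪ J2.image p := by
        intro q hq
        simp only [hN2, mem_filter] at hq
        obtain ⟨hq1, hq2⟩ := hq
        obtain ⟨a, ha, rfl⟩ := (memP q).1 hq1
        simp only [mem_union, mem_insert, mem_singleton, mem_image]
        have a0 : a ≠ k - 1 := by rintro rfl; exact hT.1 _ hq2
        by_cases a1 : a = 0
        · subst a1; simp
        by_cases a2 : a = k - 2
        · subst a2; simp
        right
        refine ⟨a, ?_, rfl⟩
        simp only [hJ2, mem_filter, mem_Icc]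
        exact ⟨by omega, hq2⟩
      have s3 : Disjoint J1 J2 := by
        rw [Finset.disjoint_left]
        intro b hb1 hb2
        simp only [hJ1, hJ2, mem_filter, mem_Icc] at hb1 hb2
        refine E2 w hw 0 b (k-2) (by omega) (by omega) (by omega) hb1.2 hw2 hw1 ?_
        rw [hlast]; exact hb2.2
      have s4 : J1.card + J2.card ≤ k - 3 := by
        rw [← card_union_of_disjoint s3]
        refine (card_le_card (t := Icc 1 (k-3)) ?_).trans (by simp)
        exact union_subset (filter_subset _ _) (filter_subset _ _)
      have t1 := (card_le_card s1).trans (card_union_le _ _)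
      have t2 := (card_le_card s2).trans (card_union_le _ _)
      have t3 : J1.card ≥ (J1.image (fun b => p (b+1))).card := card_image_le
      have t4 : J2.card ≥ (J2.image p).card := card_image_le
      have t5 := card_le_two (a := p 1) (b := p (k-1))
      have t6 := card_le_two (a := p 0) (b := p (k-2))
      omega
    have o1 := hout1 (p 0)
    have o2 := hin1 (p (k-1))
    by_cases hne : W0.Nonempty ∧ WK.Nonempty
    · obtain ⟨hA, hB⟩ := hne
      have u1 : 2 * k + W0.card ≤ n + i := by
        obtain ⟨x, hx, hx'⟩ := ex_high r hT W0 hA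
        simp only [hW0, mem_filter, mem_univ, true_and] at hx
        have h1 : inDeg r x = _ := split (fun q => r q x)
        have h2 : P.filter (fun q => r q x) = P := by
          refine filter_true_of_mem ?_
          intro q hq
          obtain ⟨a, ha, rfl⟩ := (memP q).1 hq
          exact mono x hx.1 0 a (by omega) ha hx.2
        have h3 : (W0.filter fun q => r q x).card ≤ (univ.filter fun w => w ∉ P ∧ r w x).card := by
          apply card_le_card
          intro q
          simp only [hW0, mem_filter, mem_univ, true_and]
          tauto
        have := hin2 x
        rw [h2, cardP] at h1
        omega
      have u2 : 2 * k + WK.card ≤ n + i := by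
        obtain ⟨x, hx, hx'⟩ := ex_high' r hT WK hB
        simp only [hWK, mem_filter, mem_univ, true_and] at hx
        have h1 : outDeg r x = _ := split (fun q => r x q)
        have h2 : P.filter (fun q => r x q) = P := by
          refine filter_true_of_mem ?_
          intro q hq
          obtain ⟨a, ha, rfl⟩ := (memP q).1 hq
          exact mono' x hx.1 a (k-1) (by omega) (by omega) hx.2
        have h3 : (WK.filter fun q => r x q).card ≤ (univ.filter fun w => w ∉ P ∧ r x w).card := by
          apply card_le_card
          intro q
          simp only [hWK, mem_filter, mem_univ, true_and]
          tauto
        have := hout2 x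
        rw [h2, cardP] at h1
        omega
      omega
    · have e1 : WK.Nonempty → W0.Nonempty := by
        rintro ⟨y, hy⟩
        simp only [hWK, mem_filter, mem_univ, true_and] at hy
        have := hp (p 0) y W0 (nePW 0 (by omega) y hy.1) (by
          intro q h1 h2
          simp only [hW0, mem_filter, mem_univ, true_and]
          refine ⟨?_, h1⟩
          intro hq
          obtain ⟨a, ha, rfl⟩ := (memP q).1 hq
          exact t_not hT h2 (mono' y hy.1 a (k-1) (by omega) (by omega) hy.2))
        exact card_pos.1 (by omega)
      have e2 : W0.Nonempty → WK.Nonempty := by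
        rintro ⟨y, hy⟩
        simp only [hW0, mem_filter, mem_univ, true_and] at hy
        have := hp y (p (k-1)) WK (nePW _ (by omega) y hy.1).symm (by
          intro q h1 h2
          simp only [hWK, mem_filter, mem_univ, true_and]
          refine ⟨?_, h2⟩
          intro hq
          obtain ⟨a, ha, rfl⟩ := (memP q).1 hq
          exact t_not hT h1 (mono y hy.1 0 a (by omega) ha hy.2))
        exact card_pos.1 (by omega)
      have z0 : W0 = ∅ := by
        by_contra h
        have h := nonempty_iff_ne_empty.2 h
        exact hne ⟨h, e2 h⟩
      have zK : WK = ∅ := by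
        by_contra h
        have h := nonempty_iff_ne_empty.2 h
        exact hne ⟨e1 h, h⟩
      rw [z0, card_empty] at d1
      rw [zK, card_empty] at d2
      have a0 : ∀ w ∉ P, r w (p 0) := by
        intro w hw
        refine t_or hT (nePW 0 (by omega) w hw) ?_
        intro h
        have : w ∈ W0 := by simp only [hW0, mem_filter, mem_univ, true_and]; exact ⟨hw, h⟩
        rw [z0] at this; simp at this
      have aK : ∀ w ∉ P, r (p (k-1)) w := by
        intro w hw
        refine t_or hT (nePW (k-1) (by omega) w hw).symm ?_
        intro h
        have : w ∈ WK := by simp only [hWK, mem_filter, mem_univ, true_and]; exact ⟨hw, h⟩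
        rw [zK] at this; simp at this
      obtain ⟨x, hx, hxmin⟩ := Finset.exists_min_image (univ.filter fun w => w ∉ P)
        (fun w => (P.filter fun q => r w q).card) ⟨w0, by simpa using hw0⟩
      simp only [mem_filter, mem_univ, true_and] at hx hxmin
      have nf : ∀ y ∉ P, ∀ j < k, r x (p j) → ¬ r (p j) y := by
        intro y hy j hj h1 h2
        refine absurd (hxmin y hy) (not_le.2 (card_lt_card ?_))
        rw [Finset.ssubset_iff_of_subset]
        · refine ⟨p j, ?_, ?_⟩
          · simp only [mem_filter]; exact ⟨pP j hj, h1⟩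
          · simp only [mem_filter]; exact fun h => t_not hT h2 h.2
        · intro q hq
          simp only [mem_filter] at hq ⊢
          refine ⟨hq.1, ?_⟩
          obtain ⟨a, ha, rfl⟩ := (memP q).1 hq.1
          have : a < j := by
            by_contra hc
            exact t_not hT hq.2 (mono y hy j a (by omega) ha h2)
          exact mono' x hx a j (by omega) hj h1
      by_cases hNe : (univ.filter fun q => q ∉ P ∧ r x q).Nonempty
      · set N := (univ.filter fun q => q ∉ P ∧ r x q) with hN
        obtain ⟨y, hy, hy'⟩ := ex_low r hT N hNe
        simp only [hN, mem_filter, mem_univ, true_and] at hy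
        have h1 := hp x y (N.filter fun q => r q y) (t_ne hT hy.2) (by
          intro q h1 h2
          simp only [hN, mem_filter, mem_univ, true_and]
          refine ⟨⟨?_, h1⟩, h2⟩
          intro hq
          obtain ⟨a, ha, rfl⟩ := (memP q).1 hq
          exact nf y hy.1 a ha h1 h2)
        have h2 : N.card + P.card ≤ n := by
          rw [hn, ← card_union_of_disjoint]
          · exact card_le_univ _
          · rw [Finset.disjoint_left]
            intro q
            simp only [hN, mem_filter, mem_univ, true_and]
            tauto
        omega
      · have hN0 : ∀ q ∉ P, ¬ r x q := by
          intro q hq h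
          exact hNe ⟨q, by simp only [mem_filter, mem_univ, true_and]; exact ⟨hq, h⟩⟩
        have hex : ∃ j, j < k ∧ r (p j) x := ⟨k-1, by omega, aK x hx⟩
        obtain ⟨t, ht, ht1, ht2⟩ : ∃ t, t + 1 < k ∧ r x (p t) ∧ r (p (t+1)) x := by
          classical
          have hs := Nat.find_spec hex
          have h0 : Nat.find hex ≠ 0 := by
            intro h
            rw [h] at hs
            exact t_not hT hs.2 (a0 x hx)
          have e : Nat.find hex - 1 + 1 = Nat.find hex := by omega
          refine ⟨Nat.find hex - 1, by omega, ?_, by rw [e]; exact hs.2⟩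
          have := Nat.find_min hex (m := Nat.find hex - 1) (by omega)
          refine t_or hT (nePW _ (by omega) x hx) ?_
          intro h
          exact this ⟨by omega, h⟩
        have side1 : ∃ q, t + 1 < q ∧ q < k ∧ r (p t) (p q) := by
          by_contra hc
          push Not at hc
          have := hp (p t) x {p (t+1)} (nePW t (by omega) x hx) (by
            intro q h1 h2
            by_cases hq : q ∈ P
            · obtain ⟨a, ha, rfl⟩ := (memP q).1 hq
              have : ¬ a ≤ t := by
                intro h
                exact t_not hT h2 (mono' x hx a t h (by omega) ht1)
              have : ¬ t + 1 < a := fun h => hc a h ha h1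
              have : a = t + 1 := by omega
              simp [this]
            · exact absurd h1 (nf q hq t (by omega) ht1))
          simp at this
          omega
        have side2 : ∃ a, a < t ∧ r (p a) (p (t+1)) := by
          by_contra hc
          push Not at hc
          have := hp x (p (t+1)) {p t} (nePW _ (by omega) x hx).symm (by
            intro q h1 h2
            by_cases hq : q ∈ P
            · obtain ⟨a, ha, rfl⟩ := (memP q).1 hq
              have : ¬ t + 1 ≤ a := by
                intro h
                exact t_not hT h1 (mono x hx (t+1) a h ha ht2)
              have : ¬ a < t := fun h => hc a h h2
              have : a = t := by omega
              simp [this]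
            · exact absurd h1 (hN0 q hq))
          simp at this
          omega
        obtain ⟨q, hq1, hq2, hq3⟩ := side1
        obtain ⟨a, ha1, ha2⟩ := side2
        refine E2 x hx a t (q-1) ha1 (by omega) (by omega) ha2 ?_ ?_ ?_
        · exact mono x hx (t+1) (q-1) (by omega) (by omega) ht2
        · exact mono' x hx (a+1) t (by omega) (by omega) ht1
        · rwa [show q - 1 + 1 = q by omega]
  · have cov : ∀ w ∉ P, r (p 1) w ∨ r w (p (k-2)) := by
      intro w hw
      by_contra hc
      push Not at hc
      exact hmid ⟨w, hw, t_or hT (nePW 1 (by omega) w hw) hc.1,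
        t_or hT (nePW (k-2) (by omega) w hw).symm hc.2⟩
    set X := univ.filter (fun w => w ∉ P ∧ r (p 1) w) with hX
    set Y := univ.filter (fun w => w ∉ P ∧ r w (p (k-2))) with hY
    have memX : ∀ q, q ∈ X ↔ q ∉ P ∧ r (p 1) q := by intro q; simp [hX]
    have memY : ∀ q, q ∈ Y ↔ q ∉ P ∧ r q (p (k-2)) := by intro q; simp [hY]
    have cXY : n ≤ k + X.card + Y.card := by
      rw [hn, ← cardP, ← card_univ]
      refine (card_le_card (t := P ∪ X ∪ Y) ?_).trans ((card_union_le _ _).trans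
        (Nat.add_le_add_right (card_union_le _ _) _))
      intro q _
      simp only [mem_union, memX, memY]
      by_cases hq : q ∈ P
      · tauto
      · have := cov q hq; tauto
    have nX : X.Nonempty := by
      by_contra hX0
      have hy : w0 ∈ Y := by
        rcases cov w0 hw0 with h | h
        · exact absurd ⟨w0, (memX _).2 ⟨hw0, h⟩⟩ hX0
        · exact (memY _).2 ⟨hw0, h⟩
      rw [memY] at hy
      have := hp (p 0) w0 {p (k-1)} (nePW 0 (by omega) w0 hw0) (by
        intro q h1 h2
        by_cases hq : q ∈ P
        · obtain ⟨a, ha, rfl⟩ := (memP q).1 hq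
          have : ¬ a ≤ k - 2 := by
            intro h
            exact t_not hT h2 (mono' w0 hw0 a (k-2) h (by omega) hy.2)
          have : a = k - 1 := by omega
          simp [this]
        · exact absurd ⟨q, (memX _).2 ⟨hq, mono q hq 0 1 (by omega) (by omega) h1⟩⟩ hX0)
      simp at this
      omega
    have nY : Y.Nonempty := by
      by_contra hY0
      have hy : w0 ∈ X := by
        rcases cov w0 hw0 with h | h
        · exact (memX _).2 ⟨hw0, h⟩
        · exact absurd ⟨w0, (memY _).2 ⟨hw0, h⟩⟩ hY0
      rw [memX] at hy
      have := hp w0 (p (k-1)) {p 0} (nePW _ (by omega) w0 hw0).symm (by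
        intro q h1 h2
        by_cases hq : q ∈ P
        · obtain ⟨a, ha, rfl⟩ := (memP q).1 hq
          have : ¬ 1 ≤ a := by
            intro h
            exact t_not hT h1 (mono w0 hw0 1 a h ha hy.2)
          have : a = 0 := by omega
          simp [this]
        · exact absurd ⟨q, (memY _).2 ⟨hq, mono' q hq (k-2) (k-1) (by omega) (by omega) h2⟩⟩ hY0)
      simp at this
      omega
    have u1 : 2 * (k - 1) + X.card ≤ n + i := by
      obtain ⟨x, hx, hx'⟩ := ex_high r hT X nX
      rw [memX] at hx
      have h1 : inDeg r x = _ := split (fun q => r q x)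
      have h2 : P.erase (p 0) ⊆ P.filter (fun q => r q x) := by
        intro q hq
        rw [mem_erase] at hq
        obtain ⟨a, ha, rfl⟩ := (memP q).1 hq.2
        have : a ≠ 0 := by rintro rfl; exact hq.1 rfl
        exact mem_filter.2 ⟨hq.2, mono x hx.1 1 a (by omega) ha hx.2⟩
      have h2 := card_le_card h2
      rw [card_erase_of_mem (pP 0 (by omega)), cardP] at h2
      have h3 : (X.filter fun q => r q x).card ≤ (univ.filter fun w => w ∉ P ∧ r w x).card := by
        apply card_le_card
        intro q
        simp only [hX, mem_filter, mem_univ, true_and]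
        tauto
      have := hin2 x
      omega
    have u2 : 2 * (k - 1) + Y.card ≤ n + i := by
      obtain ⟨x, hx, hx'⟩ := ex_high' r hT Y nY
      rw [memY] at hx
      have h1 : outDeg r x = _ := split (fun q => r x q)
      have h2 : P.erase (p (k-1)) ⊆ P.filter (fun q => r x q) := by
        intro q hq
        rw [mem_erase] at hq
        obtain ⟨a, ha, rfl⟩ := (memP q).1 hq.2
        have : a ≠ k - 1 := by rintro rfl; exact hq.1 rfl
        exact mem_filter.2 ⟨hq.2, mono' x hx.1 a (k-2) (by omega) (by omega) hx.2⟩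
      have h2 := card_le_card h2
      rw [card_erase_of_mem (pP _ (by omega)), cardP] at h2
      have h3 : (Y.filter fun q => r x q).card ≤ (univ.filter fun w => w ∉ P ∧ r x w).card := by
        apply card_le_card
        intro q
        simp only [hY, mem_filter, mem_univ, true_and]
        tauto
      have := hout2 x
      omega
    have c1 : 2 * π + 1 ≤ (P.filter fun q => r (p 1) q).card := by
      set N := P.filter fun q => r (p 1) q with hN
      obtain ⟨x, hx, hx'⟩ := ex_low r hT N ⟨p 2, by
        simp only [hN, mem_filter]; exact ⟨pP 2 (by omega), harc 1 (by omega)⟩⟩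
      simp only [hN, mem_filter] at hx
      have := hp (p 1) x (N.filter fun q => r q x) (t_ne hT hx.2) (by
        intro q h1 h2
        simp only [hN, mem_filter]
        refine ⟨⟨?_, h1⟩, h2⟩
        by_contra hq
        obtain ⟨a, ha, rfl⟩ := (memP x).1 hx.1
        have : a ≠ 0 := by
          rintro rfl
          exact t_not hT hx.2 (harc 0 (by omega))
        exact t_not hT h2 (mono q hq 1 a (by omega) ha h1))
      omega
    have c2 : 2 * π ≤ (P.filter fun q => r q (p 1)).card + 1 := by
      set N := (P.filter fun q => r q (p 1)).erase (p (k-1)) with hN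
      have hNle : N.card ≤ (P.filter fun q => r q (p 1)).card := card_le_card (erase_subset _ _)
      obtain ⟨x, hx, hx'⟩ := ex_low' r hT N ⟨p 0, by
        simp only [hN, mem_filter, mem_erase]
        refine ⟨?_, pP 0 (by omega), harc 0 (by omega)⟩
        intro h
        have := hinj _ (by omega) _ (by omega) h
        omega⟩
      simp only [hN, mem_filter, mem_erase] at hx
      have := hp x (p 1) (insert (p (k-1)) (N.filter fun q => r x q)) (t_ne hT hx.2.2) (by
        intro q h1 h2
        simp only [hN, mem_filter, mem_erase, mem_insert]
        by_cases hqk : q = p (k-1)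
        · exact Or.inl hqk
        right
        refine ⟨⟨hqk, ?_, h2⟩, h1⟩
        by_contra hq
        obtain ⟨a, ha, rfl⟩ := (memP x).1 hx.2.1
        have : a ≠ k - 1 := by
          rintro rfl
          exact hx.1 rfl
        rcases cov q hq with h | h
        · exact t_not hT h h2
        · exact t_not hT h1 (mono' q hq a (k-2) (by omega) (by omega) h))
      have h3 := card_insert_le (p (k-1)) (N.filter fun q => r x q)
      omega
    have c3 := in_out r hT P (p 1) (pP 1 (by omega))
    omega

end Aux

theorem stmt17 (r : V → V → Prop) [DecidableRel r] (hT : IsTournament r)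
    (hn : 9 ≤ Fintype.card V)
    (π i : ℕ) (hπ : IsPi2 r π) (hi : IsIrreg r i)
    (hπbig : (Fintype.card V : ℤ) - 9 < 12 * π)
    (hibig : (6 * i : ℤ) < 12 * π - (Fintype.card V + 8)) :
    PathExtendable r := by
  intro l hl hl2 hne
  obtain ⟨w0, hw0⟩ : ∃ w, w ∉ l.toFinset := by
    by_contra h
    push Not at h
    exact hne (eq_univ_iff_forall.2 h)
  obtain ⟨p, hp⟩ : ∃ p : ℕ → V, l = (List.range l.length).map p := by
    refine ⟨fun j => l.getD j w0, ?_⟩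
    apply List.ext_getElem
    · simp
    · intro j h1 h2
      simp [h1]
  set k := l.length with hk
  clear_value k
  subst hp
  by_contra hE
  have deg : ∀ u, inDeg r u + outDeg r u + 1 = Fintype.card V := fun u =>
    in_out r hT univ u (mem_univ u)
  have hinj : ∀ a < k, ∀ b < k, p a = p b → a = b := by
    intro a ha b hb h
    exact List.inj_on_of_nodup_map hl.1 (by simpa using ha) (by simpa using hb) h
  have harc : ∀ a, a + 1 < k → r (p a) (p (a+1)) := by
    intro a ha
    have h := hl.2
    unfold List.Chain' at h
    rw [List.isChain_iff_getElem] at h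
    have := h a (by simpa using ha)
    simpa using this
  refine core r hT π i (Fintype.card V) rfl hπ.1 ?_ ?_ ?_ ?_ hn (by omega) p k hl2 hinj harc
    ((List.range k).map p).toFinset ?_ w0 hw0 ?_ ?_
  · intro u; have := deg u; have := hi.1 u; omega
  · intro u; have := deg u; have := hi.1 u; omega
  · intro u; have := deg u; have := hi.1 u; omega
  · intro u; have := deg u; have := hi.1 u; omega
  · ext q; simp
  · intro w hw j hj h1 h2
    exact hE (ext1 r p k hl w hw j hj h1 h2)
  · intro w hw a b c hab hbc hck h1 h2 h3 h4
    exact hE (ext2 r p k hl w hw a b c hab hbc hck h1 h2 h3 h4)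
end
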